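/- For all t, s ∈ ℝ, the blocks Φ₁₁(t,s) and Φ₂₂(t,s) are invertible. Moreover, Φ₁₁(t,s) = Φ₂₂(s,t)ᵀ = (Φ₁₁(s,t) − Φ₁₂(s,t)Φ₂₂(s,t)⁻¹Φ₂₁(s,t))⁻¹ = (Φ₂₂(t,s)ᵀ − Φ₁₂(t,s)ᵀΦ₁₁(t,s)⁻ᵀΦ₂₁(t,s)ᵀ)⁻¹. -/

import Mathlib

open Matrix

/-- `IsSTM F Φ`: `Φ` is the state transition matrix of `F`, i.e. for each fixed `s`,
`t ↦ Φ t s` solves `X' = F t * X`, `X s = 1` (derivatives taken entrywise). -/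
def IsSTM {ι : Type*} [Fintype ι] [DecidableEq ι] (F : ℝ → Matrix ι ι ℝ)
    (Φ : ℝ → ℝ → Matrix ι ι ℝ) : Prop :=
  (∀ s : ℝ, Φ s s = 1) ∧
  ∀ (s t : ℝ) (i j : ι), HasDerivAt (fun t' : ℝ => Φ t' s i j) ((F t * Φ t s) i j) t

/-!
Write `M(t) = [[A, -R], [-Q, -Aᵀ]]`. For every constant matrix `K`, the derivative of
`Φ(u, s)ᵀ K Φ(u, r)` in `u` is `Φ(u, s)ᵀ (Mᵀ K + K M) Φ(u, r)`. Two choices of `K` give everything.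

* For the symplectic matrix `J` one has `Mᵀ J + J M = 0`, so `Φ(u, s)ᵀ J Φ(u, r)` is constant in
  `u`. Comparing `u = s` with `u = r` gives `J Φ(s, r) = Φ(r, s)ᵀ J`, which expresses the blocks of
  `Φ(s, r)` through those of `Φ(r, s)` and shows that the two matrices are mutually inverse. The
  Schur complement formulas are then block inversion.
* For `K = [[0, 0], [-1, 0]]` one has `Mᵀ K + K M = diag(Q, R) ≥ 0`, so the matrix
  `D = Φ(t, s)ᵀ K Φ(t, s) - K` is semidefinite, with the sign of `t - s`. If `Φ₁₁(t, s) v = 0`, then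
  `w = (v, 0)` satisfies `D w = (0, v)`, hence `w ⬝ D w = 0`. Semidefiniteness forces `D w = 0`,
  that is, `v = 0`.
-/

section MatrixDeriv

variable {m n k 𝕜 : Type*}

lemma hasDerivAt_matrix [NontriviallyNormedField 𝕜] [Finite m] [Finite n] {X : 𝕜 → Matrix m n 𝕜}
    {X' : Matrix m n 𝕜} {t : 𝕜} :
    HasDerivAt X X' t ↔ ∀ i j, HasDerivAt (fun u => X u i j) (X' i j) t := by
  cases nonempty_fintype m
  cases nonempty_fintype n
  exact hasDerivAt_pi.trans (forall_congr' fun _ => hasDerivAt_pi)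

lemma hasDerivAt_matrix_mul [NontriviallyNormedField 𝕜] [Finite m] [Fintype n] [Finite k]
    {X : 𝕜 → Matrix m n 𝕜} {Y : 𝕜 → Matrix n k 𝕜} {X' : Matrix m n 𝕜} {Y' : Matrix n k 𝕜} {t : 𝕜}
    (hX : HasDerivAt X X' t) (hY : HasDerivAt Y Y' t) :
    HasDerivAt (fun u => X u * Y u) (X' * Y t + X t * Y') t := by
  rw [hasDerivAt_matrix] at hX hY ⊢
  intro i j
  simp only [Matrix.add_apply, mul_apply, ← Finset.sum_add_distrib]
  exact HasDerivAt.fun_sum fun l _ => (hX i l).fun_mul (hY l j)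

lemma hasDerivAt_matrix_transpose [NontriviallyNormedField 𝕜] [Finite m] [Finite n]
    {X : 𝕜 → Matrix m n 𝕜} {X' : Matrix m n 𝕜} {t : 𝕜} (hX : HasDerivAt X X' t) :
    HasDerivAt (fun u => (X u)ᵀ) X'ᵀ t :=
  hasDerivAt_matrix.2 fun i j => hasDerivAt_matrix.1 hX j i

lemma eq_of_hasDerivAt_matrix_zero [RCLike 𝕜] [Finite m] [Finite n] {X : 𝕜 → Matrix m n 𝕜}
    (hX : ∀ t, HasDerivAt X 0 t) (a b : 𝕜) : X a = X b := by
  ext i j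
  have hij (t : 𝕜) := hasDerivAt_matrix.1 (hX t) i j
  exact is_const_of_deriv_eq_zero (fun t => (hij t).differentiableAt) (fun t => (hij t).deriv) a b

lemma posSemidef_sub_of_hasDerivAt [Finite n] {X X' : ℝ → Matrix n n ℝ}
    (hX : ∀ t, HasDerivAt X (X' t) t) (hX' : ∀ t, (X' t).PosSemidef) {a b : ℝ} (hab : a ≤ b) :
    (X b - X a).PosSemidef := by
  cases nonempty_fintype n
  have hderiv (t : ℝ) : HasDerivAt (fun u => X u - (X u)ᵀ) 0 t := by
    refine hasDerivAt_matrix.2 fun i j => ?_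
    have hij := hasDerivAt_matrix.1 (hX t)
    simpa [(isHermitian_iff_isSymm.1 (hX' t).isHermitian).apply i j] using
      (hij i j).fun_sub (hij j i)
  have hsymm : X b - (X b)ᵀ = X a - (X a)ᵀ := eq_of_hasDerivAt_matrix_zero hderiv b a
  have hmono (v : n → ℝ) : Monotone fun t => v ⬝ᵥ X t *ᵥ v := by
    refine monotone_of_hasDerivAt_nonneg (f' := fun t => v ⬝ᵥ X' t *ᵥ v) (fun t => ?_)
      fun t => (hX' t).dotProduct_mulVec_nonneg v
    exact HasDerivAt.fun_sum fun i _ => .const_mul _ <| HasDerivAt.fun_sum fun j _ =>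
      (hasDerivAt_matrix.1 (hX t) i j).mul_const _
  refine .of_dotProduct_mulVec_nonneg ?_ fun v => ?_
  · rw [isHermitian_iff_isSymm, IsSymm, transpose_sub, eq_comm, sub_eq_sub_iff_sub_eq_sub]
    exact hsymm
  · rw [star_trivial, sub_mulVec, dotProduct_sub]
    exact sub_nonneg.2 (hmono v hab)

end MatrixDeriv

section Blocks

variable {m n α : Type*}

lemma toBlocks₁₁_inv [Fintype m] [Fintype n] [DecidableEq m] [DecidableEq n] [CommRing α]
    {M : Matrix (m ⊕ n) (m ⊕ n) α} (hM : IsUnit M) (h₂₂ : IsUnit M.toBlocks₂₂) :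
    M⁻¹.toBlocks₁₁ = (M.toBlocks₁₁ - M.toBlocks₁₂ * M.toBlocks₂₂⁻¹ * M.toBlocks₂₁)⁻¹ := by
  let := h₂₂.invertible
  have hM' : IsUnit (fromBlocks M.toBlocks₁₁ M.toBlocks₁₂ M.toBlocks₂₁ M.toBlocks₂₂) := by
    rwa [fromBlocks_toBlocks]
  let := hM'.invertible
  let := invertibleOfFromBlocks₂₂Invertible M.toBlocks₁₁ M.toBlocks₁₂ M.toBlocks₂₁ M.toBlocks₂₂
  have h := congrArg toBlocks₁₁
    (invOf_fromBlocks₂₂_eq M.toBlocks₁₁ M.toBlocks₁₂ M.toBlocks₂₁ M.toBlocks₂₂)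
  simpa only [invOf_eq_nonsing_inv, fromBlocks_toBlocks, toBlocks_fromBlocks₁₁] using h

lemma posSemidef_fromBlocks_diagonal [Finite m] [Finite n] [Ring α] [PartialOrder α] [StarRing α]
    [AddLeftMono α] {P : Matrix m m α} {R : Matrix n n α} (hP : P.PosSemidef)
    (hR : R.PosSemidef) :
    (fromBlocks P 0 0 R).PosSemidef := by
  cases nonempty_fintype m
  cases nonempty_fintype n
  refine .of_dotProduct_mulVec_nonneg
    (hP.isHermitian.fromBlocks conjTranspose_zero hR.isHermitian) fun v => ?_
  obtain ⟨x, y, rfl⟩ : ∃ x y, v = Sum.elim x y := ⟨_, _, (Sum.elim_comp_inl_inr v).symm⟩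
  simpa [fromBlocks_mulVec, Function.star_sumElim] using
    add_nonneg (hP.dotProduct_mulVec_nonneg x) (hR.dotProduct_mulVec_nonneg y)

lemma J_mul_eq_transpose_mul_J_iff [Fintype m] [DecidableEq m] [CommRing α]
    {M N : Matrix (m ⊕ m) (m ⊕ m) α} :
    J m α * N = Mᵀ * J m α ↔
      N = fromBlocks M.toBlocks₂₂ᵀ (-M.toBlocks₁₂ᵀ) (-M.toBlocks₂₁ᵀ) M.toBlocks₁₁ᵀ := by
  obtain ⟨A, B, C, D, rfl⟩ : ∃ A B C D, N = fromBlocks A B C D :=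
    ⟨_, _, _, _, (fromBlocks_toBlocks N).symm⟩
  nth_rw 1 [← fromBlocks_toBlocks M]
  simp only [J, fromBlocks_transpose, fromBlocks_multiply, fromBlocks_inj, Matrix.zero_mul,
    Matrix.mul_zero, Matrix.neg_mul, Matrix.mul_neg, Matrix.one_mul, Matrix.mul_one, zero_add,
    add_zero, neg_eq_iff_eq_neg, neg_neg]
  tauto

end Blocks

section Hamiltonian

variable {m α : Type*} [CommRing α]

/-- The coefficient matrix of the linear Hamiltonian system `x˙ = A x - R y`, `y˙ = -Q x - Aᵀ y`
in the state `x` and the costate `y`. It is a Hamiltonian matrix when `Q` and `R` are symmetric. -/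
def hamiltonianMatrix (A R Q : Matrix m m α) : Matrix (m ⊕ m) (m ⊕ m) α :=
  fromBlocks A (-R) (-Q) (-Aᵀ)

variable (m α) in
/-- The matrix of the bilinear form `((x, y), (x', y')) ↦ -(y ⬝ x')`, which pairs costates with
states. The sign makes the associated quadratic form nondecreasing along solutions when `Q` and `R`
are positive semidefinite. -/
def costatePairing [DecidableEq m] : Matrix (m ⊕ m) (m ⊕ m) α :=
  fromBlocks 0 0 (-1) 0

variable [Fintype m] [DecidableEq m] {A R Q : Matrix m m α}

lemma hamiltonianMatrix_transpose_mul_J_add (hR : R.IsSymm) (hQ : Q.IsSymm) :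
    (hamiltonianMatrix A R Q)ᵀ * J m α + J m α * hamiltonianMatrix A R Q = 0 := by
  simp [hamiltonianMatrix, J, fromBlocks_transpose, fromBlocks_multiply, fromBlocks_add, hR.eq,
    hQ.eq]

lemma hamiltonianMatrix_transpose_mul_costatePairing_add (hQ : Q.IsSymm) :
    (hamiltonianMatrix A R Q)ᵀ * costatePairing m α + costatePairing m α * hamiltonianMatrix A R Q =
      fromBlocks Q 0 0 R := by
  simp [hamiltonianMatrix, costatePairing, fromBlocks_transpose, fromBlocks_multiply,
    fromBlocks_add, hQ.eq]

lemma isUnit_toBlocks₁₁_of_semidefinite {N : Matrix (m ⊕ m) (m ⊕ m) ℝ}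
    (hN : (Nᵀ * costatePairing m ℝ * N - costatePairing m ℝ).PosSemidef ∨
      (costatePairing m ℝ - Nᵀ * costatePairing m ℝ * N).PosSemidef) :
    IsUnit N.toBlocks₁₁ := by
  rw [← mulVec_injective_iff_isUnit]
  refine (injective_iff_map_eq_zero N.toBlocks₁₁.mulVecLin).2 fun v hv => ?_
  rw [mulVecLin_apply] at hv
  let w : m ⊕ m → ℝ := Sum.elim v 0
  let D := Nᵀ * costatePairing m ℝ * N - costatePairing m ℝ
  have hKw : costatePairing m ℝ *ᵥ w = Sum.elim (0 : m → ℝ) (-v) := by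
    simp [w, costatePairing, fromBlocks_mulVec, neg_mulVec]
  have hKNw : costatePairing m ℝ *ᵥ N *ᵥ w = 0 := by
    rw [← fromBlocks_toBlocks N]
    simp [w, costatePairing, fromBlocks_mulVec, hv]
  have hDw : D *ᵥ w = Sum.elim (0 : m → ℝ) v := by
    simp [D, sub_mulVec, ← mulVec_mulVec, hKNw, hKw, ← Sum.elim_neg_neg]
  have hwDw : w ⬝ᵥ D *ᵥ w = 0 := by simp [hDw, w]
  have hDw_zero : D *ᵥ w = 0 := by
    rcases hN with hD | hD
    · exact (hD.dotProduct_mulVec_zero_iff w).1 hwDw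
    · have hnegD : (-D).PosSemidef := by simpa only [D, neg_sub] using hD
      rw [← neg_eq_zero, ← neg_mulVec]
      exact (hnegD.dotProduct_mulVec_zero_iff w).1 (by simpa [neg_mulVec] using hwDw)
  exact funext fun i => congrFun (hDw.symm.trans hDw_zero) (Sum.inr i)

end Hamiltonian

namespace IsSTM

variable {ι : Type*} [Fintype ι] [DecidableEq ι] {F : ℝ → Matrix ι ι ℝ} {Φ : ℝ → ℝ → Matrix ι ι ℝ}

lemma hasDerivAt (hΦ : IsSTM F Φ) (s t : ℝ) : HasDerivAt (fun u => Φ u s) (F t * Φ t s) t :=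
  hasDerivAt_matrix.2 (hΦ.2 s t)

lemma hasDerivAt_transpose_mul_mul (hΦ : IsSTM F Φ) (K : Matrix ι ι ℝ) (s r t : ℝ) :
    HasDerivAt (fun u => (Φ u s)ᵀ * K * Φ u r)
      ((Φ t s)ᵀ * ((F t)ᵀ * K + K * F t) * Φ t r) t := by
  have hK : HasDerivAt (fun _ => K) 0 t := hasDerivAt_matrix.2 fun i j => hasDerivAt_const t (K i j)
  convert hasDerivAt_matrix_mul (hasDerivAt_matrix_mul
    (hasDerivAt_matrix_transpose (hΦ.hasDerivAt s t)) hK) (hΦ.hasDerivAt r t) using 1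
  rw [transpose_mul]
  noncomm_ring

lemma mul_eq_transpose_mul (hΦ : IsSTM F Φ) {K : Matrix ι ι ℝ}
    (hK : ∀ t, (F t)ᵀ * K + K * F t = 0) (t s : ℝ) : K * Φ s t = (Φ t s)ᵀ * K := by
  have h := eq_of_hasDerivAt_matrix_zero (fun u => by
    simpa [hK] using hΦ.hasDerivAt_transpose_mul_mul K s t u) s t
  simpa [hΦ.1] using h

lemma mul_eq_one (hΦ : IsSTM F Φ) {K : Matrix ι ι ℝ} (hKu : IsUnit K)
    (hK : ∀ t, (F t)ᵀ * K + K * F t = 0) (t s : ℝ) : Φ s t * Φ t s = 1 := by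
  have h := eq_of_hasDerivAt_matrix_zero (fun u => by
    simpa [hK] using hΦ.hasDerivAt_transpose_mul_mul K s s u) t s
  apply hKu.mul_left_cancel
  simpa [hΦ.1, ← hΦ.mul_eq_transpose_mul hK, Matrix.mul_assoc] using h

lemma posSemidef_transpose_mul_mul_sub (hΦ : IsSTM F Φ) {K : Matrix ι ι ℝ}
    (hK : ∀ t, ((F t)ᵀ * K + K * F t).PosSemidef) (s : ℝ) {a b : ℝ} (hab : a ≤ b) :
    ((Φ b s)ᵀ * K * Φ b s - (Φ a s)ᵀ * K * Φ a s).PosSemidef :=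
  posSemidef_sub_of_hasDerivAt (fun t => hΦ.hasDerivAt_transpose_mul_mul K s s t)
    (fun t => (hK t).conjTranspose_mul_mul_same (Φ t s)) hab

end IsSTM

section HamiltonianSTM

variable {m : Type*} [Fintype m] [DecidableEq m] {A R Q : ℝ → Matrix m m ℝ}
  {Φ : ℝ → ℝ → Matrix (m ⊕ m) (m ⊕ m) ℝ}

lemma IsSTM.isUnit_toBlocks₁₁_of_hamiltonianMatrix
    (hΦ : IsSTM (fun t => hamiltonianMatrix (A t) (R t) (Q t)) Φ)
    (hR : ∀ t, (R t).PosSemidef) (hQ : ∀ t, (Q t).PosSemidef) (t s : ℝ) :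
    IsUnit (Φ t s).toBlocks₁₁ := by
  have hK (t : ℝ) : ((hamiltonianMatrix (A t) (R t) (Q t))ᵀ * costatePairing m ℝ +
      costatePairing m ℝ * hamiltonianMatrix (A t) (R t) (Q t)).PosSemidef := by
    rw [hamiltonianMatrix_transpose_mul_costatePairing_add
      (isHermitian_iff_isSymm.1 (hQ t).isHermitian)]
    exact posSemidef_fromBlocks_diagonal (hQ t) (hR t)
  refine isUnit_toBlocks₁₁_of_semidefinite ((le_total s t).imp (fun hst => ?_) fun hts => ?_)
  · simpa [hΦ.1] using hΦ.posSemidef_transpose_mul_mul_sub hK s hst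
  · simpa [hΦ.1] using hΦ.posSemidef_transpose_mul_mul_sub hK s hts

lemma IsSTM.mul_eq_one_of_hamiltonianMatrix
    (hΦ : IsSTM (fun t => hamiltonianMatrix (A t) (R t) (Q t)) Φ) (hR : ∀ t, (R t).IsSymm)
    (hQ : ∀ t, (Q t).IsSymm) (t s : ℝ) : Φ s t * Φ t s = 1 :=
  hΦ.mul_eq_one ((isUnit_iff_isUnit_det _).2 (isUnit_det_J m ℝ))
    (fun t => hamiltonianMatrix_transpose_mul_J_add (hR t) (hQ t)) t s

lemma IsSTM.eq_fromBlocks_of_hamiltonianMatrix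
    (hΦ : IsSTM (fun t => hamiltonianMatrix (A t) (R t) (Q t)) Φ) (hR : ∀ t, (R t).IsSymm)
    (hQ : ∀ t, (Q t).IsSymm) (t s : ℝ) :
    Φ s t = fromBlocks (Φ t s).toBlocks₂₂ᵀ (-(Φ t s).toBlocks₁₂ᵀ)
      (-(Φ t s).toBlocks₂₁ᵀ) (Φ t s).toBlocks₁₁ᵀ :=
  J_mul_eq_transpose_mul_J_iff.1 <| hΦ.mul_eq_transpose_mul
    (fun t => hamiltonianMatrix_transpose_mul_J_add (hR t) (hQ t)) t s

end HamiltonianSTM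

theorem stmt_1_general {m : Type*} [Fintype m] [DecidableEq m] {A R Q : ℝ → Matrix m m ℝ}
    (hR : ∀ t, (R t).PosSemidef) (hQ : ∀ t, (Q t).PosSemidef)
    {Φ : ℝ → ℝ → Matrix (m ⊕ m) (m ⊕ m) ℝ}
    (hΦ : IsSTM (fun t => hamiltonianMatrix (A t) (R t) (Q t)) Φ) (t s : ℝ) :
    IsUnit ((Φ t s).toBlocks₁₁) ∧ IsUnit ((Φ t s).toBlocks₂₂) ∧
    (Φ t s).toBlocks₁₁ = ((Φ s t).toBlocks₂₂)ᵀ ∧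
    (Φ t s).toBlocks₁₁ =
      ((Φ s t).toBlocks₁₁ -
        (Φ s t).toBlocks₁₂ * ((Φ s t).toBlocks₂₂)⁻¹ * (Φ s t).toBlocks₂₁)⁻¹ ∧
    (Φ t s).toBlocks₁₁ =
      (((Φ t s).toBlocks₂₂)ᵀ -
        ((Φ t s).toBlocks₁₂)ᵀ * (((Φ t s).toBlocks₁₁)⁻¹)ᵀ * ((Φ t s).toBlocks₂₁)ᵀ)⁻¹ := by
  have hRs (t : ℝ) : (R t).IsSymm := isHermitian_iff_isSymm.1 (hR t).isHermitian
  have hQs (t : ℝ) : (Q t).IsSymm := isHermitian_iff_isSymm.1 (hQ t).isHermitian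
  have hmul : Φ s t * Φ t s = 1 := hΦ.mul_eq_one_of_hamiltonianMatrix hRs hQs t s
  have hrev := hΦ.eq_fromBlocks_of_hamiltonianMatrix hRs hQs
  have h₁₁ (t s : ℝ) : IsUnit (Φ t s).toBlocks₁₁ :=
    hΦ.isUnit_toBlocks₁₁_of_hamiltonianMatrix hR hQ t s
  have h₂₂ (t s : ℝ) : IsUnit (Φ t s).toBlocks₂₂ := by
    rw [hrev s t, toBlocks_fromBlocks₂₂]
    exact (isUnit_transpose _).2 (h₁₁ s t)
  have hschur : (Φ t s).toBlocks₁₁ = ((Φ s t).toBlocks₁₁ -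
      (Φ s t).toBlocks₁₂ * ((Φ s t).toBlocks₂₂)⁻¹ * (Φ s t).toBlocks₂₁)⁻¹ := by
    rw [← toBlocks₁₁_inv (.of_mul_eq_one _ hmul) (h₂₂ s t), inv_eq_right_inv hmul]
  refine ⟨h₁₁ t s, h₂₂ t s, ?_, hschur, ?_⟩
  · rw [hrev s t, toBlocks_fromBlocks₁₁]
  · simpa [hrev t s, transpose_nonsing_inv] using hschur

theorem stmt_1 {n p : ℕ} (hn : 1 ≤ n) (hp : 1 ≤ p)
    (A Q : ℝ → Matrix (Fin n) (Fin n) ℝ) (B : ℝ → Matrix (Fin n) (Fin p) ℝ)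
    (hA : Continuous A) (hB : Continuous B) (hQ : Continuous Q)
    (hQpsd : ∀ t, (Q t).PosSemidef)
    (Φ : ℝ → ℝ → Matrix (Fin n ⊕ Fin n) (Fin n ⊕ Fin n) ℝ)
    (hΦ : IsSTM (fun t => fromBlocks (A t) (-(B t * (B t)ᵀ)) (-(Q t)) (-(A t)ᵀ)) Φ)
    (t s : ℝ) :
    IsUnit ((Φ t s).toBlocks₁₁) ∧ IsUnit ((Φ t s).toBlocks₂₂) ∧
    (Φ t s).toBlocks₁₁ = ((Φ s t).toBlocks₂₂)ᵀ ∧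
    (Φ t s).toBlocks₁₁ =
      ((Φ s t).toBlocks₁₁ -
        (Φ s t).toBlocks₁₂ * ((Φ s t).toBlocks₂₂)⁻¹ * (Φ s t).toBlocks₂₁)⁻¹ ∧
    (Φ t s).toBlocks₁₁ =
      (((Φ t s).toBlocks₂₂)ᵀ -
        ((Φ t s).toBlocks₁₂)ᵀ * (((Φ t s).toBlocks₁₁)⁻¹)ᵀ * ((Φ t s).toBlocks₂₁)ᵀ)⁻¹ :=
  stmt_1_general (fun t => posSemidef_self_mul_conjTranspose (B t)) hQpsd hΦ t s
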